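/- arXiv:1411.5663 — 2 statements merged into one kernel-verified Lean document; each statement's English description precedes it below -/
import Mathlib

section
/- The seven explicit endomorphisms e_1,…,e_7 of ℝ^8 satisfy the Clifford relations e_i∘e_j + e_j∘e_i = −2·δ_{ij}·Id_{ℝ^8} for all 1 ≤ i, j ≤ 7, and each e_i is skew-adjoint with respect to the standard inner product: ⟨e_i(v), w⟩ = −⟨v, e_i(w)⟩ for all v, w ∈ ℝ^8. -/
open RealInnerProductSpace

noncomputable section

/-- The spin representation space Δ = ℝ^8. -/
abbrev Δ : Type := EuclideanSpace ℝ (Fin 8)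

/-- The standard skew endomorphism E_{ij} of ℝ^8: u_i ↦ u_j, u_j ↦ -u_i, others ↦ 0. -/
def E (i j : Fin 8) : Δ →ₗ[ℝ] Δ where
  toFun v := v i • EuclideanSpace.single j (1 : ℝ) - v j • EuclideanSpace.single i (1 : ℝ)
  map_add' x y := by
    simp only [PiLp.add_apply, add_smul]
    module
  map_smul' c x := by
    simp only [PiLp.smul_apply, smul_eq_mul, RingHom.id_apply, mul_smul]
    module

/-- The seven Clifford endomorphisms e_1, …, e_7 (indexed 0,…,6). -/
def cliff : Fin 7 → (Δ →ₗ[ℝ] Δ) :=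
  ![  E 0 7 + E 1 6 - E 2 5 - E 3 4,
    - E 0 6 + E 1 7 + E 2 4 - E 3 5,
    - E 0 5 + E 1 4 - E 2 7 + E 3 6,
    - E 0 4 - E 1 5 - E 2 6 - E 3 7,
    - E 0 2 - E 1 3 + E 4 6 + E 5 7,
      E 0 3 - E 1 2 - E 4 7 + E 5 6,
      E 0 1 - E 2 3 - E 4 5 + E 6 7]

/-- j = e_1 ∘ e_2 ∘ e_3 ∘ e_4 ∘ e_5 ∘ e_6. -/
def jmap : Δ →ₗ[ℝ] Δ :=
  cliff 0 ∘ₗ cliff 1 ∘ₗ cliff 2 ∘ₗ cliff 3 ∘ₗ cliff 4 ∘ₗ cliff 5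

/-- Clifford multiplication of a vector x ∈ ℝ^6 on a spinor. -/
def cm6 (x : EuclideanSpace ℝ (Fin 6)) (φ : Δ) : Δ :=
  ∑ i : Fin 6, x i • cliff i.castSucc φ

/-- Clifford multiplication of a vector x ∈ ℝ^7 on a spinor. -/
def cm7 (x : EuclideanSpace ℝ (Fin 7)) (φ : Δ) : Δ :=
  ∑ i : Fin 7, x i • cliff i φ

/-!
Label the eight basis vectors by `𝔽₂³` so that `u₆` sits at the origin. Then every `e_a` is a
single Pauli operator `u_x ↦ (-1)^(z ⬝ x) u_(x + m)`, with no extra sign. Two such operators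
commute up to the sign `(-1)^(z ⬝ m' + z' ⬝ m)`, and each squares to `(-1)^(z ⬝ m)`, so the
Clifford relations amount to the seven pairs `(m, z)` having `z ⬝ m = 1` and being pairwise
non-orthogonal for the symplectic form on `𝔽₂⁶`. A Pauli operator is orthogonal, and an orthogonal
map of square `-1` is skew-adjoint.
-/

theorem inner_map_left_eq_neg_of_map_map_eq_neg {𝕜 F : Type*} [RCLike 𝕜]
    [SeminormedAddCommGroup F] [InnerProductSpace 𝕜 F] {T : F → F}
    (inner_map_map : ∀ v w, inner 𝕜 (T v) (T w) = inner 𝕜 v w) (map_map_eq_neg : ∀ v, T (T v) = -v)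
    (v w : F) : inner 𝕜 (T v) w = -inner 𝕜 v (T w) := by
  calc
    inner 𝕜 (T v) w = -inner 𝕜 (T v) (T (T w)) := by rw [map_map_eq_neg, inner_neg_right, neg_neg]
    _ = -inner 𝕜 v (T w) := by rw [inner_map_map]

section Weyl

variable {ι G 𝕜 : Type*} [AddCommGroup G] [RCLike 𝕜]

/-- The Weyl operator `u_x ↦ χ(x) u_(x + m)` attached to a translation `m` and a character `χ` of an
abelian group `G`, acting on coordinate vectors whose index set is identified with `G` by `e`. -/
def weyl (e : ι ≃ G) (m : G) (χ : AddChar G 𝕜) : EuclideanSpace 𝕜 ι →ₗ[𝕜] EuclideanSpace 𝕜 ι where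
  toFun v := WithLp.toLp 2 fun k ↦ χ (e k - m) * v (e.symm (e k - m))
  map_add' v w := by ext k; simp [mul_add]
  map_smul' c v := by ext k; simp [mul_left_comm]

variable (e : ι ≃ G)

theorem weyl_apply (m : G) (χ : AddChar G 𝕜) (v : EuclideanSpace 𝕜 ι) (k : ι) :
    weyl e m χ v k = χ (e k - m) * v (e.symm (e k - m)) := rfl

theorem weyl_apply_of_add_eq {m : G} {k l : ι} (h : e l + m = e k) (χ : AddChar G 𝕜)
    (v : EuclideanSpace 𝕜 ι) : weyl e m χ v k = χ (e l) * v l := by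
  rw [weyl_apply, ← h, add_sub_cancel_right, e.symm_apply_apply]

theorem weyl_zero_one : weyl e 0 (1 : AddChar G 𝕜) = LinearMap.id := by
  ext v k
  simp [weyl_apply]

theorem weyl_comp_weyl (m m' : G) (χ χ' : AddChar G 𝕜) :
    weyl e m χ ∘ₗ weyl e m' χ' = χ m' • weyl e (m + m') (χ * χ') := by
  ext v k
  have hχ : χ (e k - m) = χ m' * χ (e k - (m + m')) := by
    rw [← AddChar.map_add_eq_mul]
    congr 1
    abel
  simp only [LinearMap.comp_apply, LinearMap.smul_apply, PiLp.smul_apply, smul_eq_mul, weyl_apply,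
    e.apply_symm_apply, AddChar.mul_apply, hχ, sub_sub]
  ring

theorem weyl_comp_weyl_add_weyl_comp_weyl (m m' : G) (χ χ' : AddChar G 𝕜) :
    weyl e m χ ∘ₗ weyl e m' χ' + weyl e m' χ' ∘ₗ weyl e m χ =
      (χ m' + χ' m) • weyl e (m + m') (χ * χ') := by
  rw [weyl_comp_weyl, weyl_comp_weyl, add_comm m' m, mul_comm χ' χ, add_smul]

theorem weyl_comp_self [Module (ZMod 2) G] (m : G) (χ : AddChar G 𝕜) :
    weyl e m χ ∘ₗ weyl e m χ = χ m • LinearMap.id := by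
  have hχ : χ * χ = 1 := by
    ext x
    rw [AddChar.mul_apply, ← AddChar.map_add_eq_mul, ZModModule.add_self, AddChar.map_zero_eq_one,
      AddChar.one_apply]
  rw [weyl_comp_weyl, ZModModule.add_self, hχ, weyl_zero_one]

theorem inner_weyl_weyl [Fintype ι] (m : G) (χ : AddChar G 𝕜)
    (v w : EuclideanSpace 𝕜 ι) : inner 𝕜 (weyl e m χ v) (weyl e m χ w) = inner 𝕜 v w := by
  have : Finite G := Finite.of_equiv ι e
  have inner_mul_mul (x : G) (a b : 𝕜) : inner 𝕜 (χ x * a) (χ x * b) = inner 𝕜 a b := by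
    rw [← smul_eq_mul, ← smul_eq_mul, inner_smul_left, inner_smul_right, ← mul_assoc,
      RCLike.conj_mul, AddChar.norm_apply]
    simp
  simp only [PiLp.inner_apply, weyl_apply, inner_mul_mul]
  exact ((e.trans (Equiv.subRight m)).trans e.symm).sum_comp fun k ↦ inner 𝕜 (v k) (w k)

end Weyl

section SignChar

variable {κ R : Type*} [Fintype κ] [CommRing R]

variable (R) in
/-- The character `x ↦ (-1)^(z ⬝ x)` of the elementary abelian `2`-group `κ → 𝔽₂`. -/
def signChar (z : κ → ZMod 2) : AddChar (κ → ZMod 2) R :=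
  (AddChar.zmodChar 2 (neg_one_sq : (-1 : R) ^ 2 = 1)).compAddMonoidHom
    (dotProductBilin (ZMod 2) (ZMod 2) z).toAddMonoidHom

theorem signChar_apply (z x : κ → ZMod 2) : signChar R z x = (-1) ^ (z ⬝ᵥ x).val := rfl

theorem signChar_of_dotProduct_eq_zero {z x : κ → ZMod 2} (h : z ⬝ᵥ x = 0) :
    signChar R z x = 1 := by
  rw [signChar_apply, h, ZMod.val_zero, pow_zero]

theorem signChar_of_dotProduct_eq_one {z x : κ → ZMod 2} (h : z ⬝ᵥ x = 1) :
    signChar R z x = -1 := by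
  rw [signChar_apply, h, ZMod.val_one, pow_one]

theorem signChar_add_signChar_eq_zero {z z' x x' : κ → ZMod 2} (h : z ⬝ᵥ x + z' ⬝ᵥ x' = 1) :
    signChar R z x + signChar R z' x' = 0 := by
  have zero_one_or_one_zero : ∀ a b : ZMod 2, a + b = 1 → a = 0 ∧ b = 1 ∨ a = 1 ∧ b = 0 := by
    decide
  rcases zero_one_or_one_zero _ _ h with ⟨hx, hx'⟩ | ⟨hx, hx'⟩
  · rw [signChar_of_dotProduct_eq_zero hx, signChar_of_dotProduct_eq_one hx', add_neg_cancel]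
  · rw [signChar_of_dotProduct_eq_one hx, signChar_of_dotProduct_eq_zero hx', neg_add_cancel]

variable {ι 𝕜 : Type*} [RCLike 𝕜] {e : ι ≃ (κ → ZMod 2)} {m z : κ → ZMod 2} {k l : ι}

theorem weyl_signChar_apply_of_dotProduct_eq_zero (hl : e l + m = e k) (hz : z ⬝ᵥ e l = 0)
    (v : EuclideanSpace 𝕜 ι) : weyl e m (signChar 𝕜 z) v k = v l := by
  rw [weyl_apply_of_add_eq e hl, signChar_of_dotProduct_eq_zero hz, one_mul]

theorem weyl_signChar_apply_of_dotProduct_eq_one (hl : e l + m = e k) (hz : z ⬝ᵥ e l = 1)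
    (v : EuclideanSpace 𝕜 ι) : weyl e m (signChar 𝕜 z) v k = -v l := by
  rw [weyl_apply_of_add_eq e hl, signChar_of_dotProduct_eq_one hz, neg_one_mul]

end SignChar

/-- The labelling of the basis of `Δ` by `𝔽₂³`: the binary digits of the (zero-based) index, lowest
first, translated by `(1, 0, 1)`. The translation absorbs the signs that the plain binary labelling
would leave in front of four of the `e_a`. -/
def spinorLabel : Fin 8 ≃ (Fin 3 → ZMod 2) :=
  (finFunctionFinEquiv (m := 2) (n := 3)).symm.trans (Equiv.addRight (![1, 0, 1] : Fin 3 → ZMod 2))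

/-- The translation part of `cliff a` as a Weyl operator. -/
def cliffShift : Fin 7 → Fin 3 → ZMod 2 :=
  ![![1, 1, 1], ![0, 1, 1], ![1, 0, 1], ![0, 0, 1], ![0, 1, 0], ![1, 1, 0], ![1, 0, 0]]

/-- The vector `z` whose character `x ↦ (-1)^(z ⬝ x)` is the phase of `cliff a` as a Weyl
operator. -/
def cliffPhase : Fin 7 → Fin 3 → ZMod 2 :=
  ![![0, 1, 0], ![1, 1, 0], ![1, 0, 0], ![0, 0, 1], ![0, 1, 1], ![1, 0, 1], ![1, 1, 1]]

theorem cliffPhase_dotProduct_cliffShift_self (a : Fin 7) : cliffPhase a ⬝ᵥ cliffShift a = 1 := by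
  decide +revert

theorem cliffPhase_dotProduct_cliffShift_add_of_ne {a b : Fin 7} (h : a ≠ b) :
    cliffPhase a ⬝ᵥ cliffShift b + cliffPhase b ⬝ᵥ cliffShift a = 1 := by
  decide +revert

theorem E_apply (i j k : Fin 8) (v : Δ) :
    E i j v k = (if k = j then v i else 0) - (if k = i then v j else 0) := by
  simp [E]

theorem cliff_eq_weyl (a : Fin 7) :
    cliff a = weyl spinorLabel (cliffShift a) (signChar ℝ (cliffPhase a)) := by
  ext v k
  -- `simp only` reduces `cliff a v k` to `v l` or `-v l`; unification reads off `l`, and the two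
  -- `decide`s check the translation and the sign in `𝔽₂³`.
  fin_cases a <;> fin_cases k <;>
    simp only [cliff, Fin.reduceFinMk, Fin.zero_eta, Fin.mk_one, Matrix.cons_val,
      LinearMap.add_apply, LinearMap.sub_apply, LinearMap.neg_apply,
      PiLp.add_apply, PiLp.sub_apply, PiLp.neg_apply, E_apply, Fin.reduceEq, zero_ne_one,
      one_ne_zero, reduceIte, add_zero, zero_add, sub_zero, zero_sub, neg_zero, neg_neg,
      sub_neg_eq_add] <;>
    first
    | exact (weyl_signChar_apply_of_dotProduct_eq_zero (by decide) (by decide) v).symm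
    | exact (weyl_signChar_apply_of_dotProduct_eq_one (by decide) (by decide) v).symm

theorem cliff_comp_self (a : Fin 7) : cliff a ∘ₗ cliff a = -LinearMap.id := by
  rw [cliff_eq_weyl, weyl_comp_self,
    signChar_of_dotProduct_eq_one (cliffPhase_dotProduct_cliffShift_self a), neg_one_smul]

theorem cliff_comp_cliff_add_of_ne {a b : Fin 7} (h : a ≠ b) :
    cliff a ∘ₗ cliff b + cliff b ∘ₗ cliff a = 0 := by
  rw [cliff_eq_weyl, cliff_eq_weyl, weyl_comp_weyl_add_weyl_comp_weyl,
    signChar_add_signChar_eq_zero (cliffPhase_dotProduct_cliffShift_add_of_ne h), zero_smul]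

theorem inner_cliff_cliff (a : Fin 7) (v w : Δ) : ⟪cliff a v, cliff a w⟫ = ⟪v, w⟫ := by
  rw [cliff_eq_weyl, inner_weyl_weyl]

theorem inner_cliff_left (a : Fin 7) (v w : Δ) : ⟪cliff a v, w⟫ = -⟪v, cliff a w⟫ :=
  inner_map_left_eq_neg_of_map_map_eq_neg (inner_cliff_cliff a)
    (LinearMap.congr_fun (cliff_comp_self a)) v w

/-- The endomorphisms e_1,…,e_7 satisfy the Clifford relations
`e_i ∘ e_j + e_j ∘ e_i = -2 δ_{ij} Id` and each e_i is skew-adjoint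
with respect to the standard inner product on ℝ^8. -/
theorem clifford_relations_and_skew_adjoint :
    (∀ i j : Fin 7,
      cliff i ∘ₗ cliff j + cliff j ∘ₗ cliff i =
        (if i = j then (-2 : ℝ) else 0) • LinearMap.id) ∧
    (∀ (i : Fin 7) (v w : Δ), ⟪cliff i v, w⟫ = -⟪v, cliff i w⟫) := by
  refine ⟨fun i j ↦ ?_, inner_cliff_left⟩
  split_ifs with h
  · rw [h, cliff_comp_self, neg_smul, two_smul, neg_add]
  · rw [cliff_comp_cliff_add_of_ne h, zero_smul]

end
end

section
/- The endomorphism j := e_1∘e_2∘e_3∘e_4∘e_5∘e_6 of ℝ^8 satisfies j∘j = −Id_{ℝ^8}, it anti-commutes with Clifford multiplication by vectors of ℝ^6, i.e. j∘e_i = −e_i∘j for every 1 ≤ i ≤ 6, and it is a linear isometry: ⟨j(v), j(w)⟩ = ⟨v, w⟩ for all v, w ∈ ℝ^8. -/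
open RealInnerProductSpace

noncomputable section

/-!
The Clifford relation `x · x · φ = -‖x‖² φ` on `ℝ⁷` polarizes to `eᵢ² = -1` and `eᵢ eⱼ = -eⱼ eᵢ` for
`i ≠ j`. In any ring, the product `ω` of `n` such elements satisfies `ω² = (-1) ^ (n (n + 1) / 2)`
and `ω eᵢ = (-1) ^ (n - 1) eᵢ ω`; for `n = 6` both signs are `-1`. Each `eᵢ` is skew-adjoint with
square `-1`, hence unitary, and so is the product `j`.
-/

section Ring

variable {ι κ R : Type*} [Ring R]

/-- A family of pairwise anticommuting square roots of `-1` in a ring: the images of an orthonormal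
basis under a Clifford map, for a negative definite form. -/
structure IsCliffordFamily (e : ι → R) : Prop where
  mul_self (i : ι) : e i * e i = -1
  anticomm {i k : ι} (hik : i ≠ k) : e i * e k = -(e k * e i)

theorem mul_neg_one_pow_mul (a b : R) (n : ℕ) : a * ((-1) ^ n * b) = (-1) ^ n * (a * b) :=
  ((Commute.neg_one_right a).pow_right n).left_comm b

theorem list_prod_mul_of_anticomm {a : R} {l : List R} (h : ∀ b ∈ l, b * a = -(a * b)) :
    l.prod * a = (-1) ^ l.length * (a * l.prod) := by
  induction l with
  | nil => simp
  | cons b l ih =>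
    obtain ⟨hb, hl⟩ := List.forall_mem_cons.mp h
    calc (b :: l).prod * a = b * ((-1) ^ l.length * (a * l.prod)) := by
          rw [List.prod_cons, mul_assoc, ih hl]
      _ = (-1) ^ l.length * -(a * (b * l.prod)) := by
          rw [mul_neg_one_pow_mul, ← mul_assoc b, hb, neg_mul, mul_assoc]
      _ = (-1) ^ (b :: l).length * (a * (b :: l).prod) := by
          rw [List.length_cons, List.prod_cons, pow_succ, mul_assoc, neg_one_mul]

namespace IsCliffordFamily

theorem comp_injective {e : ι → R} (he : IsCliffordFamily e) {f : κ → ι}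
    (hf : Function.Injective f) : IsCliffordFamily (e ∘ f) where
  mul_self i := he.mul_self (f i)
  anticomm hik := he.anticomm (hf.ne hik)

theorem of_sum_smul_mul_self {K : Type*} [CommRing K] [Algebra K R] [Fintype ι] {e : ι → R}
    (h : ∀ x : ι → K, (∑ i, x i • e i) * (∑ i, x i • e i) = -(∑ i, x i ^ 2) • (1 : R)) :
    IsCliffordFamily e := by
  classical
  have mul_self (i : ι) : e i * e i = -1 := by
    simpa [Pi.single_apply] using h (Pi.single i 1)
  refine ⟨mul_self, fun {i k} hik => ?_⟩
  have sum_sq : ∑ l, (Pi.single i 1 + Pi.single k 1 : ι → K) l ^ 2 = 1 + 1 := by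
    simp [add_sq, Finset.sum_add_distrib, Pi.single_apply, hik.symm]
  have add_mul_self : (e i + e k) * (e i + e k) = -1 + -1 := by
    have h_single := h (Pi.single i 1 + Pi.single k 1)
    rw [sum_sq] at h_single
    simpa [add_smul, Finset.sum_add_distrib, Pi.single_apply] using h_single
  rw [add_mul, mul_add, mul_add, mul_self, mul_self] at add_mul_self
  exact eq_neg_of_add_eq_zero_left (by linear_combination (norm := abel) add_mul_self)

theorem tail {n : ℕ} {e : Fin (n + 1) → R} (he : IsCliffordFamily e) :
    IsCliffordFamily (Fin.tail e) :=
  he.comp_injective (Fin.succ_injective n)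

end IsCliffordFamily

variable {n : ℕ}

/-- The Clifford volume element `e₀ e₁ ⋯ eₙ₋₁`, as an ordered product of a family in a ring. -/
def cliffordVolume (e : Fin n → R) : R :=
  (List.ofFn e).prod

theorem cliffordVolume_succ (e : Fin (n + 1) → R) :
    cliffordVolume e = e 0 * cliffordVolume (Fin.tail e) := by
  rw [cliffordVolume, List.ofFn_succ, List.prod_cons]
  rfl

namespace IsCliffordFamily

theorem cliffordVolume_tail_mul_head {e : Fin (n + 1) → R} (he : IsCliffordFamily e) :
    cliffordVolume (Fin.tail e) * e 0 = (-1) ^ n * (e 0 * cliffordVolume (Fin.tail e)) := by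
  have anticomm_tail : ∀ b ∈ List.ofFn (Fin.tail e), b * e 0 = -(e 0 * b) :=
    List.forall_mem_ofFn_iff.mpr fun i => he.anticomm (Fin.succ_ne_zero i)
  simpa only [cliffordVolume, List.length_ofFn] using list_prod_mul_of_anticomm anticomm_tail

theorem cliffordVolume_mul_self {e : Fin n → R} (he : IsCliffordFamily e) :
    cliffordVolume e * cliffordVolume e = (-1) ^ (n + 1).choose 2 := by
  induction n with
  | zero => simp [cliffordVolume]
  | succ n ih =>
    have tail_mul_head := he.cliffordVolume_tail_mul_head
    have tail_mul_self := ih he.tail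
    rw [cliffordVolume_succ]
    set ω := cliffordVolume (Fin.tail e)
    calc e 0 * ω * (e 0 * ω) = e 0 * (ω * e 0) * ω := by simp only [mul_assoc]
      _ = (-1) ^ n * (e 0 * e 0 * (ω * ω)) := by
          rw [tail_mul_head, mul_neg_one_pow_mul]; simp only [mul_assoc]
      _ = (-1) ^ (n + 1) * (ω * ω) := by rw [he.mul_self, pow_succ, mul_assoc]
      _ = (-1) ^ (n + 2).choose 2 := by
          rw [tail_mul_self, ← pow_add, Nat.choose_succ_succ' (n + 1) 1, Nat.choose_one_right]

-- The sign is `(-1) ^ (n - 1)`, with the exponent shifted to avoid truncated subtraction.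
theorem cliffordVolume_mul {e : Fin n → R} (he : IsCliffordFamily e) (i : Fin n) :
    cliffordVolume e * e i = (-1) ^ (n + 1) * (e i * cliffordVolume e) := by
  induction n with
  | zero => exact i.elim0
  | succ n ih =>
    have tail_mul_head := he.cliffordVolume_tail_mul_head
    have tail_mul (k : Fin n) := ih he.tail k
    rw [cliffordVolume_succ]
    set ω := cliffordVolume (Fin.tail e)
    cases i using Fin.cases with
    | zero =>
      calc e 0 * ω * e 0 = (-1) ^ n * (e 0 * (e 0 * ω)) := by
            rw [mul_assoc, tail_mul_head, mul_neg_one_pow_mul]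
        _ = (-1) ^ (n + 2) * (e 0 * (e 0 * ω)) := by rw [pow_add, neg_one_sq, mul_one]
    | succ k =>
      calc e 0 * ω * e k.succ = e 0 * (ω * e k.succ) := mul_assoc _ _ _
        _ = e 0 * ((-1) ^ (n + 1) * (e k.succ * ω)) := congrArg (e 0 * ·) (tail_mul k)
        _ = (-1) ^ (n + 1) * -(e k.succ * (e 0 * ω)) := by
            rw [mul_neg_one_pow_mul, ← mul_assoc (e 0), he.anticomm (Fin.succ_ne_zero k).symm,
              neg_mul, mul_assoc (e k.succ)]
        _ = (-1) ^ (n + 2) * (e k.succ * (e 0 * ω)) := by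
            rw [pow_succ _ (n + 1), mul_assoc, neg_one_mul]

end IsCliffordFamily

theorem mem_unitary_of_mem_skewAdjoint_of_mul_self [StarRing R] {a : R} (ha : a ∈ skewAdjoint R)
    (h : a * a = -1) : a ∈ unitary R := by
  rw [skewAdjoint.mem_iff] at ha
  simp [Unitary.mem_iff, ha, h]

end Ring

theorem inner_map_map_of_mem_unitary {𝕜 V : Type*} [RCLike 𝕜] [NormedAddCommGroup V]
    [InnerProductSpace 𝕜 V] [FiniteDimensional 𝕜 V] {f : Module.End 𝕜 V}
    (hf : f ∈ unitary (Module.End 𝕜 V)) (v w : V) : inner 𝕜 (f v) (f w) = inner 𝕜 v w := by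
  have star_mul : LinearMap.adjoint f * f = 1 := Unitary.star_mul_self_of_mem hf
  rw [← LinearMap.adjoint_inner_right, ← Module.End.mul_apply, star_mul, Module.End.one_apply]

theorem E_mem_skewAdjoint (i k : Fin 8) : E i k ∈ skewAdjoint (Module.End ℝ Δ) := by
  rw [skewAdjoint.mem_iff, LinearMap.star_eq_adjoint, eq_comm, LinearMap.eq_adjoint_iff]
  intro v w
  simp only [E, LinearMap.neg_apply, LinearMap.coe_mk, AddHom.coe_mk, neg_sub, inner_sub_left,
    inner_sub_right, inner_smul_left, inner_smul_right, Real.ringHom_apply,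
    EuclideanSpace.inner_single_left, EuclideanSpace.inner_single_right, one_mul]
  ring

theorem cliff_mem_skewAdjoint (i : Fin 7) : cliff i ∈ skewAdjoint (Module.End ℝ Δ) := by
  fin_cases i <;> simp only [cliff] <;>
    apply_rules [add_mem, sub_mem, neg_mem, E_mem_skewAdjoint]

theorem cm7_eq (x : EuclideanSpace ℝ (Fin 7)) (φ : Δ) :
    cm7 x φ =
      !₂[-x 0 * φ 7 + x 1 * φ 6 + x 2 * φ 5 + x 3 * φ 4 + x 4 * φ 2 - x 5 * φ 3 - x 6 * φ 1,
        -x 0 * φ 6 - x 1 * φ 7 - x 2 * φ 4 + x 3 * φ 5 + x 4 * φ 3 + x 5 * φ 2 + x 6 * φ 0,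
        x 0 * φ 5 - x 1 * φ 4 + x 2 * φ 7 + x 3 * φ 6 - x 4 * φ 0 - x 5 * φ 1 + x 6 * φ 3,
        x 0 * φ 4 + x 1 * φ 5 - x 2 * φ 6 + x 3 * φ 7 - x 4 * φ 1 + x 5 * φ 0 - x 6 * φ 2,
        -x 0 * φ 3 + x 1 * φ 2 + x 2 * φ 1 - x 3 * φ 0 - x 4 * φ 6 + x 5 * φ 7 + x 6 * φ 5,
        -x 0 * φ 2 - x 1 * φ 3 - x 2 * φ 0 - x 3 * φ 1 - x 4 * φ 7 - x 5 * φ 6 - x 6 * φ 4,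
        x 0 * φ 1 - x 1 * φ 0 + x 2 * φ 3 - x 3 * φ 2 + x 4 * φ 4 + x 5 * φ 5 - x 6 * φ 7,
        x 0 * φ 0 + x 1 * φ 1 - x 2 * φ 2 - x 3 * φ 3 + x 4 * φ 5 - x 5 * φ 4 + x 6 * φ 6] := by
  ext k
  fin_cases k <;> simp [cm7, cliff, E, Fin.sum_univ_seven, sub_eq_add_neg]

theorem cm7_cm7_self (x : EuclideanSpace ℝ (Fin 7)) (φ : Δ) :
    cm7 x (cm7 x φ) = -‖x‖ ^ 2 • φ := by
  rw [EuclideanSpace.real_norm_sq_eq, Fin.sum_univ_seven]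
  ext k
  fin_cases k <;> simp only [cm7_eq, Fin.isValue, Fin.zero_eta, Fin.mk_one, Fin.reduceFinMk,
    Matrix.cons_val, PiLp.smul_apply, smul_eq_mul] <;> ring

theorem isCliffordFamily_cliff : IsCliffordFamily (R := Module.End ℝ Δ) cliff := by
  refine .of_sum_smul_mul_self (K := ℝ) fun x => LinearMap.ext fun φ => ?_
  have sum_apply (ψ : Δ) : (∑ i, x i • cliff i) ψ = cm7 (WithLp.toLp 2 x) ψ := by
    simp only [LinearMap.sum_apply, LinearMap.smul_apply, cm7]
  rw [Module.End.mul_apply, sum_apply, sum_apply, cm7_cm7_self, EuclideanSpace.real_norm_sq_eq]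
  rfl

theorem isCliffordFamily_cliff_castSucc :
    IsCliffordFamily (cliff ∘ Fin.castSucc : Fin 6 → Module.End ℝ Δ) :=
  isCliffordFamily_cliff.comp_injective (Fin.castSucc_injective 6)

theorem jmap_eq_cliffordVolume :
    jmap = cliffordVolume (cliff ∘ Fin.castSucc : Fin 6 → Module.End ℝ Δ) := by
  simp only [cliffordVolume, List.ofFn_succ, List.ofFn_zero, List.prod_cons, List.prod_nil, mul_one]
  rfl

theorem jmap_mem_unitary : jmap ∈ unitary (Module.End ℝ Δ) := by
  rw [jmap_eq_cliffordVolume]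
  refine list_prod_mem (List.forall_mem_ofFn_iff.mpr fun i => ?_)
  exact mem_unitary_of_mem_skewAdjoint_of_mul_self (cliff_mem_skewAdjoint _)
    (isCliffordFamily_cliff.mul_self _)

/-- j := e_1∘e_2∘e_3∘e_4∘e_5∘e_6 satisfies j∘j = -Id, anti-commutes with Clifford
multiplication by vectors of ℝ^6, and is a linear isometry of ℝ^8. -/
theorem jmap_square_anticommute_isometry :
    jmap ∘ₗ jmap = -LinearMap.id ∧
    (∀ i : Fin 6, jmap ∘ₗ cliff i.castSucc = -(cliff i.castSucc ∘ₗ jmap)) ∧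
    (∀ v w : Δ, ⟪jmap v, jmap w⟫ = ⟪v, w⟫) := by
  refine ⟨?_, fun i => ?_, inner_map_map_of_mem_unitary jmap_mem_unitary⟩
  · have volume_mul_self := isCliffordFamily_cliff_castSucc.cliffordVolume_mul_self
    rw [← jmap_eq_cliffordVolume, Odd.neg_one_pow (by decide)] at volume_mul_self
    exact volume_mul_self
  · have volume_mul := isCliffordFamily_cliff_castSucc.cliffordVolume_mul i
    rw [← jmap_eq_cliffordVolume, Odd.neg_one_pow (by decide), neg_one_mul] at volume_mul
    exact volume_mul

end
end
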